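/- Let n ≥ 5 and define the following graphs on n vertices: Sₙ is the star K_{1,n−1}; Sₙ' is the graph obtained from the star K_{1,n−2} on n−1 vertices by adding one new vertex adjacent to exactly one leaf of the star; Sₙ'' is the disjoint union of the star K_{1,n−2} and one isolated vertex. If G is a finite simple graph on n vertices that is not isomorphic to any of Sₙ, Sₙ', Sₙ'', nor to the complement of any of these three graphs, then every vertex of G belongs to the 2-core of G or to the 2-core of co(G). -/

import Mathlib

/-!
Suppose `v` lies in neither 2-core. A triangle or a 4-cycle through `v`, in `G` or in the
complement, would put `v` in a 2-core. If `v` had two neighbours `p, q` and two non-neighbours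
`r, s`, then `p, q` would be non-adjacent, `r, s` adjacent, each of `r, s` would have at most one
neighbour in `{p, q}` and each of `p, q` at least one in `{r, s}`; so the five vertices would induce
a 5-cycle through `v` (`not_two_two`), a contradiction. Hence `v` has at most one neighbour or at
most one non-neighbour.

If `v` has at most one non-neighbour, its neighbours are independent, and a non-neighbour is
adjacent to at most one of them, so `G` is a star with hub `v`, or such a star plus one vertex
that is isolated or pendant at a leaf (`iso_of_large`). The other case is the same one for the
complement.
-/

noncomputable section
open scoped Classical

/-- The star `K_{1,n-1}` on `n` vertices, with hub `0`. -/
def starG (n : ℕ) : SimpleGraph (Fin n) :=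
  SimpleGraph.fromRel fun u _ => u.val = 0

/-- The graph on `n` vertices obtained from the star `K_{1,n-2}` on the vertices
`0, 1, …, n-2` (hub `0`) by adding the new vertex `n-1` adjacent to exactly the leaf `1`. -/
def starG' (n : ℕ) : SimpleGraph (Fin n) :=
  SimpleGraph.fromRel fun u v =>
    (u.val = 0 ∧ v.val ≠ n - 1) ∨ (u.val = 1 ∧ v.val = n - 1)

/-- The disjoint union of the star `K_{1,n-2}` (hub `0`, leaves `1, …, n-2`) and the
isolated vertex `n-1`. -/
def starG'' (n : ℕ) : SimpleGraph (Fin n) :=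
  SimpleGraph.fromRel fun u v => u.val = 0 ∧ v.val ≠ n - 1

/-- A vertex `v` belongs to the 2-core of `G` if some subgraph of `G` containing `v`
has minimum degree at least `2`. -/
def InTwoCore {V : Type*} [Fintype V] (G : SimpleGraph V) (v : V) : Prop :=
  ∃ H : G.Subgraph, v ∈ H.verts ∧ ∀ u ∈ H.verts, 2 ≤ H.degree u

/-- A set in which every vertex has two neighbours inside the set lies in the 2-core. -/
lemma inTwoCore_of_set {V : Type*} [Fintype V] {G : SimpleGraph V} (S : Set V) {v : V}
    (hv : v ∈ S) (h : ∀ u ∈ S, ∃ a ∈ S, ∃ b ∈ S, a ≠ b ∧ G.Adj u a ∧ G.Adj u b) :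
    InTwoCore G v := by
  obtain ⟨H, hHv, hHa⟩ : ∃ H : G.Subgraph, H.verts = S ∧
      ∀ a ∈ S, ∀ b ∈ S, G.Adj a b → H.Adj a b :=
    ⟨(⊤ : G.Subgraph).induce S, rfl, fun a ha b hb hab => ⟨ha, hb, hab⟩⟩
  refine ⟨H, hHv ▸ hv, fun u hu => ?_⟩
  rw [hHv] at hu
  obtain ⟨a, ha, b, hb, hab, hua, hub⟩ := h u hu
  rw [← SimpleGraph.Subgraph.finset_card_neighborSet_eq_degree]
  refine Finset.one_lt_card.2 ⟨a, ?_, b, ?_, hab⟩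
  · rw [Set.mem_toFinset]
    exact hHa u hu a ha hua
  · rw [Set.mem_toFinset]
    exact hHa u hu b hb hub

lemma not_triangle {V : Type*} [Fintype V] {G : SimpleGraph V} {v p q : V}
    (h : ¬ InTwoCore G v) (hp : G.Adj v p) (hq : G.Adj v q) : ¬ G.Adj p q := by
  intro hpq
  refine h (inTwoCore_of_set {v, p, q} (by simp) ?_)
  rintro u (rfl | rfl | rfl)
  · exact ⟨p, by simp, q, by simp, hpq.ne, hp, hq⟩
  · exact ⟨v, by simp, q, by simp, hq.ne, hp.symm, hpq⟩
  · exact ⟨v, by simp, p, by simp, hp.ne, hq.symm, hpq.symm⟩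

lemma not_square {V : Type*} [Fintype V] {G : SimpleGraph V} {v p q m : V}
    (h : ¬ InTwoCore G v) (hp : G.Adj v p) (hq : G.Adj v q) (hpq : p ≠ q) (hm : m ≠ v)
    (hmp : G.Adj m p) : ¬ G.Adj m q := by
  intro hmq
  refine h (inTwoCore_of_set {v, p, q, m} (by simp) ?_)
  rintro u (rfl | rfl | rfl | rfl)
  · exact ⟨p, by simp, q, by simp, hpq, hp, hq⟩
  · exact ⟨v, by simp, m, by simp, hm.symm, hp.symm, hmp.symm⟩
  · exact ⟨v, by simp, m, by simp, hm.symm, hq.symm, hmq.symm⟩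
  · exact ⟨p, by simp, q, by simp, hpq, hmp, hmq⟩

/-- A vertex outside the 2-core lies on no 5-cycle `v, p, r, s, q`. -/
lemma not_pentagon {V : Type*} [Fintype V] {G : SimpleGraph V} {v p q r s : V}
    (h : ¬ InTwoCore G v) (hp : G.Adj v p) (hq : G.Adj v q) (hpq : p ≠ q)
    (hr : r ≠ v) (hs : s ≠ v) (hrp : G.Adj r p) (hsq : G.Adj s q) (hrs : G.Adj r s)
    (hps : p ≠ s) (hqr : q ≠ r) : False := by
  refine h (inTwoCore_of_set {v, p, q, r, s} (by simp) ?_)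
  rintro u (rfl | rfl | rfl | rfl | rfl)
  · exact ⟨p, by simp, q, by simp, hpq, hp, hq⟩
  · exact ⟨v, by simp, r, by simp, hr.symm, hp.symm, hrp.symm⟩
  · exact ⟨v, by simp, s, by simp, hs.symm, hq.symm, hsq.symm⟩
  · exact ⟨p, by simp, s, by simp, hps, hrp, hrs⟩
  · exact ⟨q, by simp, r, by simp, hqr, hsq, hrs.symm⟩

/-- A vertex outside both 2-cores cannot have two neighbours and two non-neighbours. -/
lemma not_two_two {V : Type*} [Fintype V] {G : SimpleGraph V} {v p q r s : V}
    (h : ¬ InTwoCore G v) (h' : ¬ InTwoCore Gᶜ v)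
    (hp : G.Adj v p) (hq : G.Adj v q) (hpq : p ≠ q)
    (hr : Gᶜ.Adj v r) (hs : Gᶜ.Adj v s) (hrs : r ≠ s) : False := by
  have hr' := (SimpleGraph.compl_adj _ _ _).1 hr
  have hs' := (SimpleGraph.compl_adj _ _ _).1 hs
  have hpr : p ≠ r := by rintro rfl; exact hr'.2 hp
  have hps : p ≠ s := by rintro rfl; exact hs'.2 hp
  have hqr : q ≠ r := by rintro rfl; exact hr'.2 hq
  have hqs : q ≠ s := by rintro rfl; exact hs'.2 hq
  have hrs' : G.Adj r s := by
    by_contra hc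
    exact not_triangle h' hr hs ((SimpleGraph.compl_adj _ _ _).2 ⟨hrs, hc⟩)
  have sr := not_square (m := r) h hp hq hpq hr'.1.symm
  have ss := not_square (m := s) h hp hq hpq hs'.1.symm
  -- A square-free complement forces each of `p`, `q` to be adjacent to `r` or `s`.
  have cover : ∀ x, G.Adj v x → x ≠ r → x ≠ s → G.Adj r x ∨ G.Adj s x := by
    intro x hx hxr hxs
    by_contra! hc
    refine not_square (m := x) h' hr hs hrs hx.ne' ?_ ?_
    · exact (SimpleGraph.compl_adj _ _ _).2 ⟨hxr, fun e => hc.1 e.symm⟩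
    · exact (SimpleGraph.compl_adj _ _ _).2 ⟨hxs, fun e => hc.2 e.symm⟩
  rcases cover p hp hpr hps with c | c <;> rcases cover q hq hqr hqs with d | d
  · exact sr c d
  · exact not_pentagon h hp hq hpq hr'.1.symm hs'.1.symm c d hrs' hps hqr
  · exact not_pentagon h hp hq hpq hs'.1.symm hr'.1.symm c d hrs'.symm hpr hqs
  · exact ss c d

lemma exists_perm_three {α : Type*} [DecidableEq α] {v x y a b c : α}
    (hvx : v ≠ x) (hvy : v ≠ y) (hxy : x ≠ y) (hab : a ≠ b) (hac : a ≠ c) (hbc : b ≠ c) :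
    ∃ e : Equiv.Perm α, e v = a ∧ e x = b ∧ e y = c := by
  obtain ⟨e₁, h₁⟩ : ∃ e : Equiv.Perm α, e v = a := ⟨Equiv.swap v a, by simp⟩
  obtain ⟨e₂, h₂, h₂'⟩ : ∃ e : Equiv.Perm α, e v = a ∧ e x = b := by
    refine ⟨e₁.trans (Equiv.swap (e₁ x) b), ?_, by simp⟩
    have : a ≠ e₁ x := by rw [← h₁]; exact e₁.injective.ne hvx
    simp [h₁, Equiv.swap_apply_of_ne_of_ne this hab]
  refine ⟨e₂.trans (Equiv.swap (e₂ y) c), ?_, ?_, by simp⟩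
  · have : a ≠ e₂ y := by rw [← h₂]; exact e₂.injective.ne hvy
    simp [h₂, Equiv.swap_apply_of_ne_of_ne this hac]
  · have : b ≠ e₂ y := by rw [← h₂']; exact e₂.injective.ne hxy
    simp [h₂', Equiv.swap_apply_of_ne_of_ne this hbc]

/-- If `v` is outside the 2-core of `G` and has at most one non-neighbour, then `G` is one of the
three star-like graphs, with hub `v`. -/
lemma iso_of_large {n : ℕ} (hn : 5 ≤ n) {G : SimpleGraph (Fin n)} {v : Fin n}
    (h : ¬ InTwoCore G v) (hM : ∀ x y, Gᶜ.Adj v x → Gᶜ.Adj v y → x = y) :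
    Nonempty (G ≃g starG n) ∨ Nonempty (G ≃g starG' n) ∨ Nonempty (G ≃g starG'' n) := by
  have h01 : (⟨0, by omega⟩ : Fin n) ≠ ⟨1, by omega⟩ := by simp
  have h0l : (⟨0, by omega⟩ : Fin n) ≠ ⟨n - 1, by omega⟩ := by simp; omega
  have hl1 : (⟨n - 1, by omega⟩ : Fin n) ≠ ⟨1, by omega⟩ := by simp; omega
  have tri : ∀ p q, G.Adj v p → G.Adj v q → ¬ G.Adj p q := fun p q => not_triangle h
  by_cases hx : ∃ x, Gᶜ.Adj v x
  · obtain ⟨x, hx⟩ := hx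
    have hvx := (SimpleGraph.compl_adj _ _ _).1 hx
    have hN : ∀ y, y ≠ v → (G.Adj v y ↔ y ≠ x) := by
      intro y hy
      constructor
      · rintro hvy rfl
        exact hvx.2 hvy
      · intro hyx
        by_contra hvy
        exact hyx (hM y x ((SimpleGraph.compl_adj _ _ _).2 ⟨hy.symm, hvy⟩) hx)
    have sq : ∀ p q, G.Adj v p → G.Adj v q → G.Adj x p → G.Adj x q → p = q := by
      intro p q hp hq hxp hxq
      by_contra hpq
      exact not_square h hp hq hpq hvx.1.symm hxp hxq
    by_cases hy : ∃ y, G.Adj x y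
    · right; left
      obtain ⟨y, hy⟩ := hy
      have hyv : y ≠ v := by rintro rfl; exact hvx.2 hy.symm
      obtain ⟨e, e0, el, e1⟩ := exists_perm_three hvx.1 hyv.symm hy.ne h0l h01 hl1
      have k0 : ∀ u, (e u).val = 0 ↔ u = v := fun u => by
        rw [← e.injective.eq_iff, e0, Fin.ext_iff]
      have kl : ∀ u, (e u).val = n - 1 ↔ u = x := fun u => by
        rw [← e.injective.eq_iff, el, Fin.ext_iff]
      have k1 : ∀ u, (e u).val = 1 ↔ u = y := fun u => by
        rw [← e.injective.eq_iff, e1, Fin.ext_iff]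
      refine ⟨⟨e, ?_⟩⟩
      intro a b
      simp only [starG', SimpleGraph.fromRel_adj, ne_eq, e.injective.eq_iff, k0, kl, k1]
      grind [SimpleGraph.adj_comm, SimpleGraph.irrefl]
    · right; right
      push Not at hy
      -- The image of a third vertex is irrelevant here.
      obtain ⟨e, e0, el⟩ : ∃ e : Equiv.Perm (Fin n), e v = ⟨0, by omega⟩ ∧
          e x = ⟨n - 1, by omega⟩ := by
        obtain ⟨y, hy⟩ : ∃ y, y ∉ ({v, x} : Finset (Fin n)) := by
          by_contra! hc
          have h₁ := Finset.card_le_card (fun y _ => hc y : Finset.univ ⊆ {v, x})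
          have h₂ := Finset.card_le_two (a := v) (b := x)
          simp at h₁
          omega
        simp only [Finset.mem_insert, Finset.mem_singleton, not_or] at hy
        obtain ⟨e, e0, el, -⟩ :=
          exists_perm_three hvx.1 (Ne.symm hy.1) (Ne.symm hy.2) h0l h01 hl1
        exact ⟨e, e0, el⟩
      have k0 : ∀ u, (e u).val = 0 ↔ u = v := fun u => by
        rw [← e.injective.eq_iff, e0, Fin.ext_iff]
      have kl : ∀ u, (e u).val = n - 1 ↔ u = x := fun u => by
        rw [← e.injective.eq_iff, el, Fin.ext_iff]
      refine ⟨⟨e, ?_⟩⟩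
      intro a b
      simp only [starG'', SimpleGraph.fromRel_adj, ne_eq, e.injective.eq_iff, k0, kl]
      grind [SimpleGraph.adj_comm, SimpleGraph.irrefl]
  · left
    have hN : ∀ y, y ≠ v → G.Adj v y := by
      intro y hy
      by_contra hvy
      exact hx ⟨y, (SimpleGraph.compl_adj _ _ _).2 ⟨hy.symm, hvy⟩⟩
    obtain ⟨e, e0⟩ : ∃ e : Equiv.Perm (Fin n), e v = ⟨0, by omega⟩ :=
      ⟨Equiv.swap v ⟨0, by omega⟩, by simp⟩
    have k0 : ∀ u, (e u).val = 0 ↔ u = v := fun u => by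
      rw [← e.injective.eq_iff, e0, Fin.ext_iff]
    refine ⟨⟨e, ?_⟩⟩
    intro a b
    simp only [starG, SimpleGraph.fromRel_adj, ne_eq, e.injective.eq_iff, k0]
    grind [SimpleGraph.adj_comm, SimpleGraph.irrefl]

/-- For `n ≥ 5`, if a graph `G` on `n` vertices is not isomorphic to the
star `Sₙ`, to `Sₙ'`, to `Sₙ''`, nor to the complement of any of these three graphs, then
every vertex of `G` lies in the 2-core of `G` or in the 2-core of its complement. -/
theorem stmt_8 (n : ℕ) (hn : 5 ≤ n) (G : SimpleGraph (Fin n))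
    (hG : ∀ H ∈ [starG n, starG' n, starG'' n, (starG n)ᶜ, (starG' n)ᶜ, (starG'' n)ᶜ],
      ¬ Nonempty (G ≃g H)) :
    ∀ v : Fin n, InTwoCore G v ∨ InTwoCore Gᶜ v := by
  intro v
  by_contra hcon
  obtain ⟨h, h'⟩ := not_or.1 hcon
  have hcc : ¬ InTwoCore Gᶜᶜ v := by rwa [compl_compl]
  -- An isomorphism of complements is an isomorphism of the graphs, by the same bijection.
  have iso : ∀ H : SimpleGraph (Fin n), Nonempty (Gᶜ ≃g H) → Nonempty (G ≃g Hᶜ) := by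
    rintro H ⟨e⟩
    refine ⟨⟨e.toEquiv, ?_⟩⟩
    intro a b
    have := e.map_rel_iff' (a := a) (b := b)
    rw [SimpleGraph.compl_adj, this, SimpleGraph.compl_adj, ne_eq, e.toEquiv.injective.eq_iff]
    have hne : G.Adj a b → a ≠ b := fun hab => hab.ne
    tauto
  by_cases a1 : (G.neighborFinset v).card ≤ 1
  · have hM : ∀ x y, Gᶜᶜ.Adj v x → Gᶜᶜ.Adj v y → x = y := by
      intro x y hx hy
      rw [compl_compl] at hx hy
      exact Finset.card_le_one.1 a1 x (by simpa using hx) y (by simpa using hy)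
    rcases iso_of_large hn h' hM with e | e | e
    · exact hG _ (by simp) (iso _ e)
    · exact hG _ (by simp) (iso _ e)
    · exact hG _ (by simp) (iso _ e)
  by_cases b1 : (Gᶜ.neighborFinset v).card ≤ 1
  · have hM : ∀ x y, Gᶜ.Adj v x → Gᶜ.Adj v y → x = y := by
      intro x y hx hy
      refine Finset.card_le_one.1 b1 x ?_ y ?_ <;> rwa [SimpleGraph.mem_neighborFinset]
    rcases iso_of_large hn h hM with e | e | e
    · exact hG _ (by simp) e
    · exact hG _ (by simp) e
    · exact hG _ (by simp) e
  obtain ⟨p, hp, q, hq, hpq⟩ := Finset.one_lt_card.1 (not_le.1 a1)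
  obtain ⟨r, hr, s, hs, hrs⟩ := Finset.one_lt_card.1 (not_le.1 b1)
  rw [SimpleGraph.mem_neighborFinset] at hp hq hr hs
  exact not_two_two h h' hp hq hpq hr hs hrs
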